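/- Let A be a commutative ring, let M be a flat A-module and let d ≥ 0 be an integer. Then the A-module TS^d_A(M) of symmetric tensors of degree d is a flat A-module, and for every commutative A-algebra B the canonical B-linear homomorphism TS^d_A(M) ⊗_A B ⟶ TS^d_B(M ⊗_A B) — induced by the natural map M^{⊗_A d} ⊗_A B ⟶ (M ⊗_A B)^{⊗_B d} sending (m_1 ⊗ ⋯ ⊗ m_d) ⊗ b to (m_1 ⊗ 1) ⊗ ⋯ ⊗ (m_{d-1} ⊗ 1) ⊗ (m_d ⊗ b), which carries symmetric tensors into symmetric tensors — is bijective. -/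

import Mathlib

/-!
The statement is first proved for free modules and then carried over to flat ones by a form of
Lazard's theorem: a flat module behaves like a filtered colimit of free modules.

*Free modules.* If `P` has a basis indexed by `ι`, then `P^{⊗d}` has a basis indexed by the words
`Fin d → ι`, which the symmetric group permutes. Choosing a representative word in every orbit
yields a projection `symProj` of `P^{⊗d}` onto `TS^d(P)`, which in coordinates replaces each
coefficient by the one at the representative. Hence `TS^d(P)` is a direct summand of a free module.
As `symProj` is compatible with base change (`tensorPowCompare_symProj`) and
`B ⊗ P^{⊗d} ≃ (B ⊗ P)^{⊗d}`, the base-change map of `P` is injective with image `TS^d_B(B ⊗ P)`.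

*Flat modules.* Let `π : P → M` be a surjection from a free module. The kernel of `π^{⊗d}` is
spanned by the pure tensors with a factor in `ker π`, so that the vanishing of a tensor under
`π^{⊗d}` is caused by finitely many elements of `ker π`
(`exists_finset_of_map_eq_zero`, and `exists_finset_of_map_baseChange_eq_zero` over `B`).
By the equational criterion for flatness, `π` factors as `P → Q → M` with `Q` free and these
finitely many elements vanishing in `Q` (`exists_free_factorization`). Applied to the differences
`σ t - t`, this lifts symmetric tensors on `M` or `B ⊗ M` to symmetric tensors over a free module;
applied to relations between such lifts, it makes the relations hold over a free module already.
Flatness, injectivity and the description of the image thus follow from the free case.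
-/

open scoped TensorProduct

/-- The `d`-th tensor power `M^{⊗_A d}` of an `A`-module `M`. -/
abbrev TensorPow (A : Type*) [CommRing A] (M : Type*) [AddCommGroup M] [Module A M] (d : ℕ) :=
  PiTensorProduct A (fun _ : Fin d => M)

/-- The submodule `TS^d_A(M)` of symmetric tensors of degree `d`: the tensors in `M^{⊗_A d}`
fixed by the permutation action of the symmetric group `𝔖_d` on the `d` tensor factors. -/
def symmetricTensors (A : Type*) [CommRing A] (M : Type*) [AddCommGroup M] [Module A M]
    (d : ℕ) : Submodule A (TensorPow A M d) where
  carrier := {x | ∀ σ : Equiv.Perm (Fin d), PiTensorProduct.reindex A (fun _ => M) σ x = x}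
  add_mem' := by
    intro a b ha hb σ
    simp only [map_add, ha σ, hb σ]
  zero_mem' := by
    intro σ
    simp
  smul_mem' := by
    intro c x hx σ
    simp only [map_smul, hx σ]

/-- The canonical comparison map `M^{⊗_A d} → (B ⊗_A M)^{⊗_B d}`, sending a pure tensor
`m_1 ⊗ ⋯ ⊗ m_d` to `(1 ⊗ m_1) ⊗ ⋯ ⊗ (1 ⊗ m_d)`. -/
noncomputable def tensorPowCompare (A : Type*) [CommRing A] (M : Type*) [AddCommGroup M]
    [Module A M] (d : ℕ) (B : Type*) [CommRing B] [Algebra A B] :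
    TensorPow A M d →ₗ[A] TensorPow B (B ⊗[A] M) d :=
  PiTensorProduct.lift
    (((PiTensorProduct.tprod B (s := fun _ : Fin d => B ⊗[A] M)).restrictScalars A).compLinearMap
      (fun _ => TensorProduct.mk A B M 1))

/-- The canonical base-change map `B ⊗_A TS^d_A(M) → (B ⊗_A M)^{⊗_B d}`, sending
`b ⊗ (m_1 ⊗ ⋯ ⊗ m_d)` to `b • ((1 ⊗ m_1) ⊗ ⋯ ⊗ (1 ⊗ m_d))`; its corestriction to
`TS^d_B(B ⊗_A M)` is the canonical base-change comparison map of symmetric tensors. -/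
noncomputable def symmetricTensorsBaseChange (A : Type*) [CommRing A] (M : Type*)
    [AddCommGroup M] [Module A M] (d : ℕ) (B : Type*) [CommRing B] [Algebra A B] :
    B ⊗[A] (symmetricTensors A M d) →ₗ[B] TensorPow B (B ⊗[A] M) d :=
  LinearMap.liftBaseChange B
    ((tensorPowCompare A M d B) ∘ₗ (symmetricTensors A M d).subtype)

open Module

universe u v w

/-! ### Functoriality -/

section Functoriality

variable {R : Type*} [CommRing R] {M N P : Type*} [AddCommGroup M] [Module R M]
  [AddCommGroup N] [Module R N] [AddCommGroup P] [Module R P]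

/-- The map `f^{⊗d} : M^{⊗d} → N^{⊗d}` induced by a linear map `f : M → N`. -/
noncomputable def tensorPowMap (f : M →ₗ[R] N) (d : ℕ) : TensorPow R M d →ₗ[R] TensorPow R N d :=
  PiTensorProduct.map (fun _ => f)

lemma tensorPowMap_tprod (f : M →ₗ[R] N) (d : ℕ) (x : Fin d → M) :
    tensorPowMap f d (PiTensorProduct.tprod R x) = PiTensorProduct.tprod R (fun i => f (x i)) :=
  PiTensorProduct.map_tprod _ _

lemma tensorPowMap_comp (g : N →ₗ[R] P) (f : M →ₗ[R] N) (d : ℕ) (t : TensorPow R M d) :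
    tensorPowMap (g ∘ₗ f) d t = tensorPowMap g d (tensorPowMap f d t) :=
  LinearMap.congr_fun (PiTensorProduct.map_comp (fun _ => g) (fun _ => f)) t

lemma tensorPowMap_reindex (f : M →ₗ[R] N) (d : ℕ) (σ : Equiv.Perm (Fin d))
    (t : TensorPow R M d) :
    tensorPowMap f d (PiTensorProduct.reindex R (fun _ => M) σ t) =
      PiTensorProduct.reindex R (fun _ => N) σ (tensorPowMap f d t) :=
  PiTensorProduct.map_reindex (fun _ => f) σ t

lemma tensorPowMap_surjective {f : M →ₗ[R] N} (hf : Function.Surjective f) (d : ℕ) :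
    Function.Surjective (tensorPowMap f d) := by
  intro y
  induction y using PiTensorProduct.induction_on with
  | smul_tprod r x =>
    refine ⟨r • PiTensorProduct.tprod R (fun i => Function.surjInv hf (x i)), ?_⟩
    simp [tensorPowMap_tprod, Function.surjInv_eq hf]
  | add a b ha hb =>
    obtain ⟨a, rfl⟩ := ha
    obtain ⟨b, rfl⟩ := hb
    exact ⟨a + b, map_add _ _ _⟩

/-- The map `TS^d(M) → TS^d(N)` induced by a linear map `f : M → N`. -/
noncomputable def symMap (f : M →ₗ[R] N) (d : ℕ) :
    symmetricTensors R M d →ₗ[R] symmetricTensors R N d :=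
  (tensorPowMap f d).restrict (fun t ht σ => by rw [← tensorPowMap_reindex, ht σ])

@[simp] lemma coe_symMap (f : M →ₗ[R] N) (d : ℕ) (t : symmetricTensors R M d) :
    (symMap f d t : TensorPow R N d) = tensorPowMap f d t :=
  rfl

end Functoriality

section Compare

variable {A : Type*} [CommRing A] {M N : Type*} [AddCommGroup M] [Module A M]
  [AddCommGroup N] [Module A N] {B : Type*} [CommRing B] [Algebra A B]

lemma tensorPowCompare_tprod (d : ℕ) (x : Fin d → M) :
    tensorPowCompare A M d B (PiTensorProduct.tprod A x) =
      PiTensorProduct.tprod B (fun i => (1 : B) ⊗ₜ[A] x i) := by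
  simp [tensorPowCompare]

lemma tensorPowCompare_map (f : M →ₗ[A] N) (d : ℕ) (t : TensorPow A M d) :
    tensorPowMap (f.baseChange B) d (tensorPowCompare A M d B t) =
      tensorPowCompare A N d B (tensorPowMap f d t) := by
  induction t using PiTensorProduct.induction_on with
  | smul_tprod r x =>
    rw [map_smul (tensorPowCompare A M d B), map_smul (tensorPowMap f d),
      map_smul (tensorPowCompare A N d B), LinearMap.map_smul_of_tower]
    simp [tensorPowCompare_tprod, tensorPowMap_tprod]
  | add a b ha hb => simp [ha, hb]

lemma tensorPowCompare_reindex (d : ℕ) (σ : Equiv.Perm (Fin d)) (t : TensorPow A M d) :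
    PiTensorProduct.reindex B (fun _ => B ⊗[A] M) σ (tensorPowCompare A M d B t) =
      tensorPowCompare A M d B (PiTensorProduct.reindex A (fun _ => M) σ t) := by
  induction t using PiTensorProduct.induction_on with
  | smul_tprod r x =>
    rw [map_smul (tensorPowCompare A M d B), map_smul (PiTensorProduct.reindex A (fun _ => M) σ),
      map_smul (tensorPowCompare A M d B), ← LinearEquiv.coe_coe, LinearMap.map_smul_of_tower,
      LinearEquiv.coe_coe, tensorPowCompare_tprod, PiTensorProduct.reindex_tprod,
      PiTensorProduct.reindex_tprod, tensorPowCompare_tprod]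
  | add a b ha hb => simp [ha, hb]

lemma symmetricTensorsBaseChange_tmul (d : ℕ) (b : B) (t : symmetricTensors A M d) :
    symmetricTensorsBaseChange A M d B (b ⊗ₜ t) = b • tensorPowCompare A M d B t := by
  simp [symmetricTensorsBaseChange]

lemma symmetricTensorsBaseChange_map (f : M →ₗ[A] N) (d : ℕ)
    (z : B ⊗[A] symmetricTensors A M d) :
    tensorPowMap (f.baseChange B) d (symmetricTensorsBaseChange A M d B z) =
      symmetricTensorsBaseChange A N d B ((symMap f d).baseChange B z) := by
  induction z using TensorProduct.induction_on with
  | zero => simp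
  | tmul b t => simp [symmetricTensorsBaseChange_tmul, tensorPowCompare_map]
  | add a b ha hb => simp [ha, hb]

lemma symmetricTensorsBaseChange_mem (d : ℕ) (z : B ⊗[A] symmetricTensors A M d) :
    symmetricTensorsBaseChange A M d B z ∈ symmetricTensors B (B ⊗[A] M) d := by
  induction z using TensorProduct.induction_on with
  | zero => simp
  | tmul b t =>
    rw [symmetricTensorsBaseChange_tmul]
    refine Submodule.smul_mem _ _ fun σ => ?_
    rw [tensorPowCompare_reindex, t.2 σ]
  | add a b ha hb => rw [map_add]; exact Submodule.add_mem _ ha hb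

end Compare

/-! ### Free modules -/

section Free

/-- The relation on words `Fin d → ι` of differing by a permutation of the letters. -/
def wordSetoid (ι : Type*) (d : ℕ) : Setoid (Fin d → ι) where
  r φ ψ := ∃ σ : Equiv.Perm (Fin d), φ ∘ σ = ψ
  iseqv :=
    { refl := fun φ => ⟨1, rfl⟩
      symm := by
        rintro φ _ ⟨σ, rfl⟩
        exact ⟨σ.symm, by ext; simp⟩
      trans := by
        rintro φ _ _ ⟨σ, rfl⟩ ⟨τ, rfl⟩
        exact ⟨τ.trans σ, rfl⟩ }

/-- A chosen representative of the class of a word up to permutation of its letters. -/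
noncomputable def wordRep {ι : Type*} {d : ℕ} (φ : Fin d → ι) : Fin d → ι :=
  (Quotient.mk (wordSetoid ι d) φ).out

lemma wordRep_comp {ι : Type*} {d : ℕ} (φ : Fin d → ι) (σ : Equiv.Perm (Fin d)) :
    wordRep (φ ∘ σ) = wordRep φ :=
  congrArg Quotient.out
    (Quotient.sound (s := wordSetoid ι d)
      (⟨σ, rfl⟩ : ∃ τ : Equiv.Perm (Fin d), φ ∘ τ = φ ∘ σ)).symm

lemma exists_comp_eq_wordRep {ι : Type*} {d : ℕ} (φ : Fin d → ι) :
    ∃ σ : Equiv.Perm (Fin d), φ ∘ σ = wordRep φ :=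
  (wordSetoid ι d).symm (Quotient.mk_out (s := wordSetoid ι d) φ)

variable {R : Type*} [CommRing R] {P : Type*} [AddCommGroup P] [Module R P] {ι : Type*}

/-- The basis of `P^{⊗d}` formed by the pure tensors in the vectors of a basis of `P`. -/
noncomputable abbrev powBasis (b : Basis ι R P) (d : ℕ) : Basis (Fin d → ι) R (TensorPow R P d) :=
  Basis.piTensorProduct (fun _ => b)

lemma repr_reindex (b : Basis ι R P) {d : ℕ} (σ : Equiv.Perm (Fin d)) (t : TensorPow R P d)
    (ψ : Fin d → ι) :
    (powBasis b d).repr (PiTensorProduct.reindex R (fun _ => P) σ t) ψ =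
      (powBasis b d).repr t (ψ ∘ σ) := by
  classical
  have h : Finsupp.lapply ψ ∘ₗ (powBasis b d).repr.toLinearMap ∘ₗ
      (PiTensorProduct.reindex R (fun _ => P) σ).toLinearMap =
      Finsupp.lapply (ψ ∘ σ) ∘ₗ (powBasis b d).repr.toLinearMap := by
    refine (powBasis b d).ext fun φ => ?_
    have h1 : PiTensorProduct.reindex R (fun _ => P) σ (powBasis b d φ) =
        powBasis b d (φ ∘ σ.symm) := by
      rw [Basis.piTensorProduct_apply, PiTensorProduct.reindex_tprod, Basis.piTensorProduct_apply]
      rfl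
    have h2 : φ ∘ σ.symm = ψ ↔ φ = ψ ∘ σ := by
      rw [Equiv.comp_symm_eq]
    simp only [LinearMap.comp_apply, LinearEquiv.coe_coe, h1, Basis.repr_self,
      Finsupp.lapply_apply, Finsupp.single_apply, h2]
  exact LinearMap.congr_fun h t

open scoped Classical in
/-- The projection of `P^{⊗d}` onto `TS^d(P)` attached to a basis of `P`: a basis tensor whose
word is the chosen representative of its class is sent to the sum over that class, and every
other basis tensor to `0`. -/
noncomputable def symProj (b : Basis ι R P) (d : ℕ) : TensorPow R P d →ₗ[R] TensorPow R P d :=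
  (powBasis b d).constr R fun φ =>
    if wordRep φ = φ then
      ∑ ψ ∈ Finset.univ.image (fun σ : Equiv.Perm (Fin d) => φ ∘ σ), powBasis b d ψ
    else 0

/-- In coordinates, `symProj` replaces each coefficient by the one at the representative. -/
lemma repr_symProj (b : Basis ι R P) {d : ℕ} (t : TensorPow R P d) (ψ : Fin d → ι) :
    (powBasis b d).repr (symProj b d t) ψ = (powBasis b d).repr t (wordRep ψ) := by
  classical
  have h : Finsupp.lapply ψ ∘ₗ (powBasis b d).repr.toLinearMap ∘ₗ symProj b d =
      Finsupp.lapply (wordRep ψ) ∘ₗ (powBasis b d).repr.toLinearMap := by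
    refine (powBasis b d).ext fun φ => ?_
    simp only [LinearMap.comp_apply, LinearEquiv.coe_coe, Basis.repr_self, Finsupp.lapply_apply,
      symProj, Basis.constr_basis, Finsupp.single_apply]
    have h2 : φ = wordRep ψ ↔ wordRep φ = φ ∧ ∃ σ : Equiv.Perm (Fin d), φ ∘ σ = ψ := by
      constructor
      · intro h
        obtain ⟨σ, hσ⟩ := exists_comp_eq_wordRep ψ
        refine ⟨?_, σ.symm, ?_⟩
        · rw [h, ← hσ, wordRep_comp, hσ]
        · rw [h, ← hσ]; ext; simp
      · rintro ⟨h, σ, rfl⟩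
        rw [wordRep_comp, h]
    simp only [h2]
    by_cases h3 : wordRep φ = φ
    · simp only [h3, if_true, true_and, map_sum, Basis.repr_self, Finsupp.finsetSum_apply,
        Finsupp.single_apply, Finset.sum_ite_eq', Finset.mem_image, Finset.mem_univ]
    · simp [h3]
  exact LinearMap.congr_fun h t

lemma symProj_mem (b : Basis ι R P) {d : ℕ} (t : TensorPow R P d) :
    symProj b d t ∈ symmetricTensors R P d := by
  intro σ
  refine (powBasis b d).ext_elem fun ψ => ?_
  rw [repr_reindex, repr_symProj, repr_symProj, wordRep_comp]

lemma symProj_of_mem (b : Basis ι R P) {d : ℕ} {t : TensorPow R P d}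
    (ht : t ∈ symmetricTensors R P d) : symProj b d t = t := by
  refine (powBasis b d).ext_elem fun ψ => ?_
  obtain ⟨σ, hσ⟩ := exists_comp_eq_wordRep ψ
  rw [repr_symProj, ← hσ, ← repr_reindex, ht σ]

/-- `symProj` as a linear retraction of the inclusion `TS^d(P) → P^{⊗d}`. -/
noncomputable def symRetraction (b : Basis ι R P) (d : ℕ) :
    TensorPow R P d →ₗ[R] symmetricTensors R P d :=
  (symProj b d).codRestrict _ (symProj_mem b)

lemma symRetraction_comp_subtype (b : Basis ι R P) (d : ℕ) :
    symRetraction b d ∘ₗ (symmetricTensors R P d).subtype = LinearMap.id := by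
  ext t : 2
  exact symProj_of_mem b t.2

lemma flat_symmetricTensors_of_basis (b : Basis ι R P) (d : ℕ) :
    Module.Flat R (symmetricTensors R P d) := by
  have : Module.Free R (TensorPow R P d) := Module.Free.of_basis (powBasis b d)
  exact Module.Flat.of_retract _ (symRetraction b d) (symRetraction_comp_subtype b d)

variable {B : Type*} [CommRing B] [Algebra R B]

/-- For a basis `b` of `P`, tensor powers commute with base change. -/
lemma liftBaseChange_tensorPowCompare_bijective (b : Basis ι R P) (d : ℕ) :
    Function.Bijective (LinearMap.liftBaseChange B (tensorPowCompare R P d B)) := by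
  have h : LinearMap.liftBaseChange B (tensorPowCompare R P d B) =
      (((powBasis b d).baseChange B).equiv (powBasis (b.baseChange B) d)
        (Equiv.refl _)).toLinearMap := by
    refine ((powBasis b d).baseChange B).ext fun φ => ?_
    rw [LinearEquiv.coe_coe, Basis.equiv_apply]
    simp [tensorPowCompare_tprod]
  rw [h]
  exact LinearEquiv.bijective _

lemma tensorPowCompare_symProj (b : Basis ι R P) (d : ℕ) (t : TensorPow R P d) :
    tensorPowCompare R P d B (symProj b d t) =
      symProj (b.baseChange B) d (tensorPowCompare R P d B t) := by
  classical
  have hc (φ : Fin d → ι) : tensorPowCompare R P d B (powBasis b d φ) =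
      powBasis (b.baseChange B) d φ := by
    simp [tensorPowCompare_tprod]
  have h : tensorPowCompare R P d B ∘ₗ symProj b d =
      (symProj (b.baseChange B) d).restrictScalars R ∘ₗ tensorPowCompare R P d B := by
    refine (powBasis b d).ext fun φ => ?_
    simp only [LinearMap.comp_apply, LinearMap.restrictScalars_apply, hc]
    simp only [symProj, Basis.constr_basis]
    split_ifs
    · simp only [map_sum, hc]
    · simp
  exact LinearMap.congr_fun h t

lemma baseChange_injective_of_basis (b : Basis ι R P) (d : ℕ) :
    Function.Injective (symmetricTensorsBaseChange R P d B) := by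
  have h : symmetricTensorsBaseChange R P d B =
      LinearMap.liftBaseChange B (tensorPowCompare R P d B) ∘ₗ
        (symmetricTensors R P d).subtype.baseChange B := by
    ext t
    simp [symmetricTensorsBaseChange]
  rw [h, LinearMap.coe_comp]
  refine (liftBaseChange_tensorPowCompare_bijective b d).1.comp ?_
  refine Function.LeftInverse.injective (g := (symRetraction b d).baseChange B) fun z => ?_
  rw [← LinearMap.comp_apply, ← LinearMap.baseChange_comp, symRetraction_comp_subtype]
  simp

lemma exists_baseChange_eq_of_basis (b : Basis ι R P) (d : ℕ) {y : TensorPow B (B ⊗[R] P) d}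
    (hy : y ∈ symmetricTensors B (B ⊗[R] P) d) :
    ∃ z, symmetricTensorsBaseChange R P d B z = y := by
  obtain ⟨w, rfl⟩ := (liftBaseChange_tensorPowCompare_bijective b d).2 y
  refine ⟨(symRetraction b d).baseChange B w, ?_⟩
  rw [← symProj_of_mem (b.baseChange B) hy]
  clear hy
  induction w using TensorProduct.induction_on with
  | zero => simp
  | tmul c t =>
    simp only [LinearMap.baseChange_tmul, symmetricTensorsBaseChange_tmul,
      LinearMap.liftBaseChange_tmul, map_smul, ← tensorPowCompare_symProj]
    rfl
  | add a b ha hb => simp only [map_add, ha, hb]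

end Free

/-! ### The kernel of a tensor power of a surjection -/

section Kernel

variable {R : Type*} [CommRing R] {M P : Type*} [AddCommGroup M] [Module R M]
  [AddCommGroup P] [Module R P]

/-- The submodule of `P^{⊗d}` spanned by the pure tensors with a factor in the kernel of `π`. -/
def kerSpan (π : P →ₗ[R] M) (d : ℕ) : Submodule R (TensorPow R P d) :=
  Submodule.span R {t | ∃ p : Fin d → P, (∃ i, π (p i) = 0) ∧ PiTensorProduct.tprod R p = t}

/-- Modulo `kerSpan π d`, a pure tensor only depends on the images of its factors under `π`:
the factors can be exchanged one at a time. -/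
lemma tprod_sub_tprod_mem_kerSpan (π : P →ₗ[R] M) {d : ℕ} {p q : Fin d → P}
    (h : ∀ i, π (p i) = π (q i)) :
    PiTensorProduct.tprod R p - PiTensorProduct.tprod R q ∈ kerSpan π d := by
  classical
  have key (s : Finset (Fin d)) :
      PiTensorProduct.tprod R (s.piecewise p q) - PiTensorProduct.tprod R q ∈ kerSpan π d := by
    induction s using Finset.induction_on with
    | empty => simp
    | insert i s his ih =>
      have hq : s.piecewise p q = Function.update (s.piecewise p q) i (q i) := by
        rw [eq_comm, Function.update_eq_self_iff, Finset.piecewise_eq_of_notMem _ _ _ his]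
      have h1 : PiTensorProduct.tprod R ((insert i s).piecewise p q) -
          PiTensorProduct.tprod R (s.piecewise p q) ∈ kerSpan π d := by
        conv in PiTensorProduct.tprod R (s.piecewise p q) => rw [hq]
        rw [Finset.piecewise_insert, ← MultilinearMap.map_update_sub]
        exact Submodule.subset_span ⟨_, ⟨i, by simp [h i]⟩, rfl⟩
      simpa using Submodule.add_mem _ h1 ih
  simpa using key Finset.univ

lemma mem_kerSpan_of_map_eq_zero {π : P →ₗ[R] M} (hπ : Function.Surjective π) {d : ℕ}
    {t : TensorPow R P d} (ht : tensorPowMap π d t = 0) : t ∈ kerSpan π d := by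
  -- A section of `π` gives the inverse `M^{⊗d} → P^{⊗d} / kerSpan π d` of the induced map.
  let g (m : M) : P := Function.surjInv hπ m
  have hg (m : M) : π (g m) = m := Function.surjInv_eq hπ m
  have hmk {p q : Fin d → P} (h : ∀ i, π (p i) = π (q i)) :
      (kerSpan π d).mkQ (PiTensorProduct.tprod R p) =
        (kerSpan π d).mkQ (PiTensorProduct.tprod R q) :=
    (Submodule.Quotient.eq _).2 (tprod_sub_tprod_mem_kerSpan π h)
  let φ : MultilinearMap R (fun _ : Fin d => M) (TensorPow R P d ⧸ kerSpan π d) :=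
    { toFun := fun m => (kerSpan π d).mkQ (PiTensorProduct.tprod R fun i => g (m i))
      map_update_add' := by
        intro _ m i x y
        have h (z : M) : (kerSpan π d).mkQ
            (PiTensorProduct.tprod R fun j => g (Function.update m i z j)) =
            (kerSpan π d).mkQ
              (PiTensorProduct.tprod R (Function.update (fun j => g (m j)) i (g z))) := by
          refine hmk fun j => ?_
          by_cases hj : j = i
          · subst hj; simp
          · simp [hj]
        rw [h x, h y, ← map_add, ← MultilinearMap.map_update_add]
        refine hmk fun j => ?_
        by_cases hj : j = i
        · subst hj; simp [hg]
        · simp [hj]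
      map_update_smul' := by
        intro _ m i c x
        have h (z : M) : (kerSpan π d).mkQ
            (PiTensorProduct.tprod R fun j => g (Function.update m i z j)) =
            (kerSpan π d).mkQ
              (PiTensorProduct.tprod R (Function.update (fun j => g (m j)) i (g z))) := by
          refine hmk fun j => ?_
          by_cases hj : j = i
          · subst hj; simp
          · simp [hj]
        rw [h x, ← map_smul, ← MultilinearMap.map_update_smul]
        refine hmk fun j => ?_
        by_cases hj : j = i
        · subst hj; simp [hg]
        · simp [hj] }
  have hφ : PiTensorProduct.lift φ ∘ₗ tensorPowMap π d = (kerSpan π d).mkQ := by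
    refine PiTensorProduct.ext (MultilinearMap.ext fun p => ?_)
    simp only [LinearMap.compMultilinearMap_apply, LinearMap.comp_apply, tensorPowMap_tprod,
      PiTensorProduct.lift.tprod]
    exact hmk fun i => hg _
  have h0 := LinearMap.congr_fun hφ t
  rw [LinearMap.comp_apply, ht, map_zero] at h0
  exact (Submodule.Quotient.mk_eq_zero _).1 h0.symm

/-- A tensor killed by `π^{⊗d}` is killed for a reason involving finitely many elements of
`ker π` only. -/
lemma exists_finset_of_map_eq_zero {π : P →ₗ[R] M} (hπ : Function.Surjective π) {d : ℕ}
    {t : TensorPow R P d} (ht : tensorPowMap π d t = 0) :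
    ∃ s : Finset P, (∀ p ∈ s, π p = 0) ∧
      ∀ (Q : Type w) [AddCommGroup Q] [Module R Q] (a : P →ₗ[R] Q), (∀ p ∈ s, a p = 0) →
        tensorPowMap a d t = 0 := by
  classical
  have hmem := mem_kerSpan_of_map_eq_zero hπ ht
  clear ht
  induction hmem using Submodule.span_induction with
  | mem t ht =>
    obtain ⟨p, ⟨i, hi⟩, rfl⟩ := ht
    refine ⟨{p i}, by simpa using hi, fun Q _ _ a ha => ?_⟩
    rw [tensorPowMap_tprod]
    exact MultilinearMap.map_coord_zero _ i (ha _ (by simp))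
  | zero => exact ⟨∅, by simp, fun Q _ _ a _ => map_zero _⟩
  | add x y _ _ hx hy =>
    obtain ⟨s, hs, hs'⟩ := hx
    obtain ⟨s₂, hs₂, hs₂'⟩ := hy
    refine ⟨s ∪ s₂, fun p hp => (Finset.mem_union.1 hp).elim (hs p) (hs₂ p),
      fun Q _ _ a ha => ?_⟩
    rw [map_add, hs' Q a fun p hp => ha p (Finset.mem_union_left _ hp),
      hs₂' Q a fun p hp => ha p (Finset.mem_union_right _ hp), add_zero]
  | smul r x _ hx =>
    obtain ⟨s, hs, hs'⟩ := hx
    exact ⟨s, hs, fun Q _ _ a ha => by rw [map_smul, hs' Q a ha, smul_zero]⟩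

variable {B : Type*} [CommRing B] [Algebra R B]

lemma exists_finset_of_baseChange_eq_zero {π : P →ₗ[R] M} (hπ : Function.Surjective π)
    {z : B ⊗[R] P} (hz : π.baseChange B z = 0) :
    ∃ s : Finset P, (∀ p ∈ s, π p = 0) ∧
      ∀ (Q : Type w) [AddCommGroup Q] [Module R Q] (a : P →ₗ[R] Q), (∀ p ∈ s, a p = 0) →
        a.baseChange B z = 0 := by
  classical
  obtain ⟨z, rfl⟩ := (lTensor_exact B (LinearMap.exact_subtype_ker_map π) hπ z).1 hz
  clear hz
  induction z using TensorProduct.induction_on with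
  | zero => exact ⟨∅, by simp, fun Q _ _ a _ => by simp⟩
  | tmul b k =>
    refine ⟨{(k : P)}, by simp, fun Q _ _ a ha => ?_⟩
    simp [ha (k : P) (by simp)]
  | add x y hx hy =>
    obtain ⟨s, hs, hs'⟩ := hx
    obtain ⟨s₂, hs₂, hs₂'⟩ := hy
    refine ⟨s ∪ s₂, fun p hp => (Finset.mem_union.1 hp).elim (hs p) (hs₂ p),
      fun Q _ _ a ha => ?_⟩
    rw [map_add, map_add, hs' Q a fun p hp => ha p (Finset.mem_union_left _ hp),
      hs₂' Q a fun p hp => ha p (Finset.mem_union_right _ hp), add_zero]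

lemma baseChange_surjective {π : P →ₗ[R] M} (hπ : Function.Surjective π) :
    Function.Surjective (π.baseChange B) :=
  LinearMap.lTensor_surjective B hπ

/-- The analogue of `exists_finset_of_map_eq_zero` after base change to `B`: the finitely many
elements can still be taken in `P` itself. -/
lemma exists_finset_of_map_baseChange_eq_zero {π : P →ₗ[R] M} (hπ : Function.Surjective π)
    {d : ℕ} {t : TensorPow B (B ⊗[R] P) d} (ht : tensorPowMap (π.baseChange B) d t = 0) :
    ∃ s : Finset P, (∀ p ∈ s, π p = 0) ∧
      ∀ (Q : Type w) [AddCommGroup Q] [Module R Q] (a : P →ₗ[R] Q), (∀ p ∈ s, a p = 0) →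
        tensorPowMap (a.baseChange B) d t = 0 := by
  classical
  obtain ⟨S, hS, hS'⟩ := exists_finset_of_map_eq_zero (baseChange_surjective hπ) ht
  choose! s hs hs' using fun z (hz : z ∈ S) =>
    exists_finset_of_baseChange_eq_zero.{w} hπ (hS z hz)
  refine ⟨S.biUnion s, fun p hp => ?_, fun Q _ _ a ha => ?_⟩
  · obtain ⟨z, hz, hp⟩ := Finset.mem_biUnion.1 hp
    exact hs z hz p hp
  · exact hS' _ _ fun z hz => hs' z hz Q a fun p hp => ha p (Finset.mem_biUnion.2 ⟨z, hz, hp⟩)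

end Kernel

/-! ### Flat modules -/

section Flat

variable {A : Type u} [CommRing A] {M : Type v} [AddCommGroup M] [Module A M] [Module.Flat A M]

/-- A map from a free module to a flat module factors through a free module in which finitely many
given elements of the kernel vanish. The free module need not be finite. -/
lemma exists_free_factorization {P : Type w} [AddCommGroup P] [Module A P] [Module.Free A P]
    (π : P →ₗ[A] M) (s : Finset P) (hs : ∀ p ∈ s, π p = 0) :
    ∃ (Q : Type (max u w)) (_ : AddCommGroup Q) (_ : Module A Q) (_ : Module.Free A Q)
      (a : P →ₗ[A] Q) (y : Q →ₗ[A] M),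
      y ∘ₗ a = π ∧ ∀ p ∈ s, a p = 0 := by
  classical
  let b := Module.Free.chooseBasis A P
  let T : Finset (Module.Free.ChooseBasisIndex A P) := s.biUnion fun p => (b.repr p).support
  -- `r` and `j` exhibit a finite free direct summand of `P` containing `s`.
  let j : (T →₀ A) →ₗ[A] P := Finsupp.linearCombination A (fun i : T => b i)
  let r : P →ₗ[A] (T →₀ A) :=
    Finsupp.lcomapDomain ((↑) : T → _) Subtype.val_injective ∘ₗ b.repr.toLinearMap
  have hjr (p : P) (hp : p ∈ s) : j (r p) = p := by
    have hsub : (b.repr p).support ⊆ T :=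
      Finset.subset_biUnion_of_mem (fun p => (b.repr p).support) hp
    have h1 : j (r p) = ∑ i : T, b.repr p i • b i := by
      simp only [j, r, LinearMap.comp_apply, LinearEquiv.coe_coe]
      rw [Finsupp.linearCombination_apply, Finsupp.sum_fintype _ _ (by simp)]
      rfl
    rw [h1, Finset.sum_coe_sort T (fun i => b.repr p i • b i)]
    conv_rhs => rw [← b.linearCombination_repr p, Finsupp.linearCombination_apply]
    exact (Finsupp.sum_of_support_subset _ hsub (fun i c => c • b i) fun i _ => zero_smul A (b i)).symm
  let f : (s →₀ A) →ₗ[A] (T →₀ A) := Finsupp.linearCombination A (fun p : s => r p)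
  have hf : (π ∘ₗ j) ∘ₗ f = 0 := by
    refine Finsupp.lhom_ext' fun p => LinearMap.ext_ring ?_
    simp [f, hjr p p.2, hs p p.2]
  obtain ⟨k, a, y, hay, haf⟩ := Module.Flat.exists_factorization_of_comp_eq_zero_of_free hf
  refine ⟨(Fin k →₀ A) × P, inferInstance, inferInstance, inferInstance,
    (a ∘ₗ r).prod (LinearMap.id - j ∘ₗ r), y.coprod π, ?_, fun p hp => ?_⟩
  · ext p
    have := LinearMap.congr_fun hay (r p)
    simp only [LinearMap.comp_apply] at this
    simp [← this]
  · have hap : a (r p) = 0 := by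
      simpa [f] using LinearMap.congr_fun haf (Finsupp.single ⟨p, hp⟩ 1)
    simp [hap, hjr p hp]

/-- Finitely many symmetric tensors on a flat module come from symmetric tensors on a common free
module mapping onto it. -/
lemma exists_symmetric_lift {ι : Type*} [Finite ι] {d : ℕ} (x : ι → symmetricTensors A M d) :
    ∃ (P : Type (max u v)) (_ : AddCommGroup P) (_ : Module A P) (_ : Module.Free A P)
      (π : P →ₗ[A] M) (_ : Function.Surjective π) (t : ι → symmetricTensors A P d),
      ∀ i, symMap π d (t i) = x i := by
  classical
  have := Fintype.ofFinite ι
  let π₀ : (M →₀ A) →ₗ[A] M := Finsupp.linearCombination A id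
  have hπ₀ : Function.Surjective π₀ := Finsupp.linearCombination_id_surjective A M
  choose t₀ ht₀ using fun i => tensorPowMap_surjective hπ₀ d (x i : TensorPow A M d)
  have h0 (q : ι × Equiv.Perm (Fin d)) : tensorPowMap π₀ d
      (PiTensorProduct.reindex A (fun _ => M →₀ A) q.2 (t₀ q.1) - t₀ q.1) = 0 := by
    rw [map_sub, tensorPowMap_reindex, ht₀, (x q.1).2 q.2, sub_self]
  choose s hs hs' using fun q => exists_finset_of_map_eq_zero.{max u v} hπ₀ (h0 q)
  obtain ⟨Q, _, _, _, a, y, hya, ha⟩ := exists_free_factorization π₀ (Finset.univ.biUnion s) (by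
    intro p hp
    obtain ⟨q, -, hp⟩ := Finset.mem_biUnion.1 hp
    exact hs q p hp)
  have hsym (i : ι) : tensorPowMap a d (t₀ i) ∈ symmetricTensors A _ d := by
    intro σ
    have := hs' (i, σ) _ a fun p hp => ha p (Finset.mem_biUnion.2 ⟨_, Finset.mem_univ _, hp⟩)
    rwa [map_sub, tensorPowMap_reindex, sub_eq_zero] at this
  refine ⟨Q, inferInstance, inferInstance, inferInstance, y, ?_,
    fun i => ⟨tensorPowMap a d (t₀ i), hsym i⟩, fun i => ?_⟩
  · have : Function.Surjective (y ∘ a) := by rw [← LinearMap.coe_comp, hya]; exact hπ₀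
    exact this.of_comp
  · apply Subtype.ext
    rw [coe_symMap, ← ht₀ i, ← hya, tensorPowMap_comp]

/-- A symmetric tensor on a base change `B ⊗ M`, with `M` flat over `A`, comes from a symmetric
tensor on `B ⊗ P` for some free `A`-module `P` over `M`. -/
lemma exists_symmetric_lift_baseChange {B : Type*} [CommRing B] [Algebra A B] {d : ℕ}
    {x : TensorPow B (B ⊗[A] M) d} (hx : x ∈ symmetricTensors B (B ⊗[A] M) d) :
    ∃ (P : Type (max u v)) (_ : AddCommGroup P) (_ : Module A P) (_ : Module.Free A P)
      (π : P →ₗ[A] M), ∃ t ∈ symmetricTensors B (B ⊗[A] P) d,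
      tensorPowMap (π.baseChange B) d t = x := by
  classical
  let π₀ : (M →₀ A) →ₗ[A] M := Finsupp.linearCombination A id
  have hπ₀ : Function.Surjective π₀ := Finsupp.linearCombination_id_surjective A M
  obtain ⟨t₀, ht₀⟩ := tensorPowMap_surjective (baseChange_surjective (B := B) hπ₀) d x
  have h0 (σ : Equiv.Perm (Fin d)) : tensorPowMap (π₀.baseChange B) d
      (PiTensorProduct.reindex B (fun _ => B ⊗[A] (M →₀ A)) σ t₀ - t₀) = 0 := by
    rw [map_sub, tensorPowMap_reindex, ht₀, hx σ, sub_self]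
  choose s hs hs' using fun σ => exists_finset_of_map_baseChange_eq_zero.{max u v} hπ₀ (h0 σ)
  obtain ⟨Q, _, _, _, a, y, hya, ha⟩ := exists_free_factorization π₀ (Finset.univ.biUnion s) (by
    intro p hp
    obtain ⟨q, -, hp⟩ := Finset.mem_biUnion.1 hp
    exact hs q p hp)
  refine ⟨Q, inferInstance, inferInstance, inferInstance, y,
    tensorPowMap (a.baseChange B) d t₀, fun σ => ?_, ?_⟩
  · have := hs' σ _ a fun p hp => ha p (Finset.mem_biUnion.2 ⟨_, Finset.mem_univ _, hp⟩)
    rwa [map_sub, tensorPowMap_reindex, sub_eq_zero] at this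
  · rw [← ht₀, ← hya, LinearMap.baseChange_comp, tensorPowMap_comp]

lemma flat_symmetricTensors (d : ℕ) : Module.Flat A (symmetricTensors A M d) := by
  refine Module.Flat.of_forall_isTrivialRelation fun {l f x} hfx => ?_
  obtain ⟨P, _, _, _, π, hπ, t, ht⟩ := exists_symmetric_lift x
  have h0 : tensorPowMap π d ((∑ i, f i • t i : symmetricTensors A P d) : TensorPow A P d) = 0 := by
    rw [← coe_symMap, map_sum]
    simp only [map_smul, ht, hfx, ZeroMemClass.coe_zero]
  obtain ⟨s, hs, hs'⟩ := exists_finset_of_map_eq_zero.{max u v} hπ h0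
  obtain ⟨Q, _, _, _, a, y, hya, ha⟩ := exists_free_factorization π s hs
  have := flat_symmetricTensors_of_basis (Module.Free.chooseBasis A Q) d
  have hrel : ∑ i, f i • symMap a d (t i) = 0 := by
    apply Subtype.ext
    rw [ZeroMemClass.coe_zero, ← hs' _ a ha, ← coe_symMap, map_sum]
    simp only [map_smul]
  obtain ⟨n, c, z, hz, hc⟩ := Module.Flat.isTrivialRelation_of_sum_smul_eq_zero hrel
  refine ⟨n, c, fun j => symMap y d (z j), fun i => ?_, hc⟩
  have hx : x i = symMap y d (symMap a d (t i)) := by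
    rw [← ht i, ← hya]
    exact Subtype.ext (tensorPowMap_comp y a d (t i : TensorPow A P d))
  rw [hx, show symMap a d (t i) = _ from hz i, map_sum]
  simp only [map_smul]

lemma symmetricTensorsBaseChange_injective {B : Type*} [CommRing B] [Algebra A B] (d : ℕ) :
    Function.Injective (symmetricTensorsBaseChange A M d B) := by
  rw [injective_iff_map_eq_zero]
  intro z hz
  obtain ⟨n, β, x, rfl⟩ : ∃ (n : ℕ) (β : Fin n → B) (x : Fin n → symmetricTensors A M d),
      z = ∑ i, β i ⊗ₜ x i := by
    obtain ⟨S, rfl⟩ := TensorProduct.exists_finset z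
    refine ⟨S.card, fun i => (S.equivFin.symm i).1.1, fun i => (S.equivFin.symm i).1.2, ?_⟩
    rw [← Finset.sum_coe_sort S (fun q => q.1 ⊗ₜ[A] q.2), ← S.equivFin.symm.sum_comp]
  obtain ⟨P, _, _, _, π, hπ, t, ht⟩ := exists_symmetric_lift x
  let w : B ⊗[A] symmetricTensors A P d := ∑ i, β i ⊗ₜ t i
  have hw : (symMap π d).baseChange B w = ∑ i, β i ⊗ₜ x i := by
    simp [w, ht]
  rw [← hw, ← symmetricTensorsBaseChange_map] at hz
  obtain ⟨s, hs, hs'⟩ := exists_finset_of_map_baseChange_eq_zero.{max u v} hπ hz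
  obtain ⟨Q, _, _, _, a, y, hya, ha⟩ := exists_free_factorization π s hs
  have h0 := hs' _ a ha
  rw [symmetricTensorsBaseChange_map] at h0
  have h1 : (symMap a d).baseChange B w = 0 :=
    (injective_iff_map_eq_zero _).1
      (baseChange_injective_of_basis (Module.Free.chooseBasis A Q) d) _ h0
  have h2 : symMap π d = symMap y d ∘ₗ symMap a d := by
    refine LinearMap.ext fun t => Subtype.ext ?_
    rw [← hya]
    exact tensorPowMap_comp y a d (t : TensorPow A P d)
  rw [← hw, h2, LinearMap.baseChange_comp, LinearMap.comp_apply, h1, map_zero]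

lemma range_symmetricTensorsBaseChange {B : Type*} [CommRing B] [Algebra A B] (d : ℕ) :
    LinearMap.range (symmetricTensorsBaseChange A M d B) =
      symmetricTensors B (B ⊗[A] M) d := by
  refine le_antisymm ?_ fun x hx => ?_
  · rintro _ ⟨z, rfl⟩
    exact symmetricTensorsBaseChange_mem d z
  · obtain ⟨P, _, _, _, π, t, ht, rfl⟩ := exists_symmetric_lift_baseChange hx
    obtain ⟨z, rfl⟩ := exists_baseChange_eq_of_basis (Module.Free.chooseBasis A P) d ht
    exact ⟨(symMap π d).baseChange B z, (symmetricTensorsBaseChange_map π d z).symm⟩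

end Flat

/-- Let `M` be a flat `A`-module and `d ≥ 0`. Then `TS^d_A(M)` is a flat `A`-module, and for
every commutative `A`-algebra `B` the canonical `B`-linear base-change homomorphism
`TS^d_A(M) ⊗_A B ⟶ TS^d_B(M ⊗_A B)` is bijective; equivalently, the base-change map
`symmetricTensorsBaseChange` is injective with image exactly `TS^d_B(B ⊗_A M)`. -/
theorem symmetricTensors_flat_baseChange (A : Type*) [CommRing A] (M : Type*) [AddCommGroup M]
    [Module A M] (d : ℕ) [Module.Flat A M] :
    Module.Flat A (symmetricTensors A M d) ∧
    ∀ (B : Type*) [CommRing B] [Algebra A B],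
      Function.Injective (symmetricTensorsBaseChange A M d B) ∧
      LinearMap.range (symmetricTensorsBaseChange A M d B) =
        symmetricTensors B (B ⊗[A] M) d := by
  exact ⟨flat_symmetricTensors d, fun B _ _ =>
    ⟨symmetricTensorsBaseChange_injective d, range_symmetricTensorsBaseChange d⟩⟩
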